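/- arXiv:2601.15639 — 4 statements merged into one kernel-verified Lean document; each statement's English description precedes it below -/
import Mathlib

section
/- Let f : [0,∞) → ℝ be convex with f(1) = 0 and let G : [0,∞) → [0,∞) be increasing, convex, with G(0) = 0. Let 𝓜 be a finite set with |𝓜| ≥ 2, let p_M be the uniform pmf on 𝓜, let p_{M̂|M} be a channel from 𝓜 to 𝓜, and let ε = ∑_m p_M(m) ∑_{m̂ ≠ m} p_{M̂|M}(m̂|m) be the error probability. Then I_{G,f}(p_M, p_{M̂|M}) ≥ G( (1/|𝓜|)·f(|𝓜|(1−ε)) + ((|𝓜|−1)/|𝓜|)·f(|𝓜|ε/(|𝓜|−1)) ). -/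
open scoped BigOperators

/-- A probability mass function on a finite type: nonnegative and summing to 1. -/
def IsPMF {X : Type*} [Fintype X] (p : X → ℝ) : Prop :=
  (∀ x, 0 ≤ p x) ∧ ∑ x, p x = 1

/-- Absolute continuity `p ≪ q`: `q x = 0` implies `p x = 0`. -/
def AbsCont {X : Type*} (p q : X → ℝ) : Prop :=
  ∀ x, q x = 0 → p x = 0

/-- The f-divergence `D_f(p‖q) = ∑_{x : q(x) > 0} q(x) f(p(x)/q(x))`. -/
noncomputable def fDiv {X : Type*} [Fintype X] (f : ℝ → ℝ) (p q : X → ℝ) : ℝ :=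
  ∑ x, if 0 < q x then q x * f (p x / q x) else 0

/-- The `(G,f)`-information `I_{G,f}(p_X, p_{Y|X})`: the infimum over output pmfs
`q_Y` (with `p_{Y|X=x} ≪ q_Y` for all `x`) of `∑_x p_X x • G (D_f(p_{Y|X=x}‖q_Y))`. -/
noncomputable def Igf {X Y : Type*} [Fintype X] [Fintype Y]
    (G f : ℝ → ℝ) (pX : X → ℝ) (W : X → Y → ℝ) : ℝ :=
  sInf {v : ℝ | ∃ qY : Y → ℝ, IsPMF qY ∧ (∀ x, AbsCont (W x) qY) ∧
    v = ∑ x, pX x * G (fDiv f (W x) qY)}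

theorem jens_aux {ι : Type*} (s : Finset ι) (f : ℝ → ℝ) (hf : ConvexOn ℝ (Set.Ici 0) f)
    (w a : ι → ℝ) (hw : ∀ i ∈ s, 0 ≤ w i) (ha : ∀ i ∈ s, 0 ≤ a i)
    (hwa : ∀ i ∈ s, w i = 0 → a i = 0) (hT : 0 < ∑ i ∈ s, w i) :
    (∑ i ∈ s, w i) * f ((∑ i ∈ s, a i) / ∑ i ∈ s, w i) ≤ ∑ i ∈ s, w i * f (a i / w i) := by
  have h := hf.map_centerMass_le (t := s) (w := w) (p := fun i => a i / w i) hw hT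
    (fun i hi => div_nonneg (ha i hi) (hw i hi))
  simp only [Finset.centerMass, smul_eq_mul, Function.comp] at h
  have e : ∑ i ∈ s, w i * (a i / w i) = ∑ i ∈ s, a i := by
    refine Finset.sum_congr rfl fun i hi => ?_
    by_cases h0 : w i = 0
    · simp [h0, hwa i hi h0]
    · field_simp
  rw [e, inv_mul_eq_div, inv_mul_eq_div, le_div_iff₀ hT] at h
  linarith

theorem fDiv_eq_aux {X : Type*} [Fintype X] (f : ℝ → ℝ) (p q : X → ℝ) (hq : ∀ x, 0 ≤ q x) :
    fDiv f p q = ∑ x, q x * f (p x / q x) := by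
  refine Finset.sum_congr rfl fun x _ => ?_
  split_ifs with h
  · rfl
  · rw [le_antisymm (not_lt.mp h) (hq x)]; simp

/-- Fano-type inequality for `I_{G,f}`: with `M` uniform on a finite message set
of size at least 2 and error probability `ε`, the `(G,f)`-information between the
message and its estimate is at least
`G( (1/|𝓜|) f(|𝓜|(1-ε)) + ((|𝓜|-1)/|𝓜|) f(|𝓜|ε/(|𝓜|-1)) )`. -/
theorem Igf_fano {M : Type*} [Fintype M] [DecidableEq M]
    (G f : ℝ → ℝ)
    (hf : ConvexOn ℝ (Set.Ici 0) f) (hf1 : f 1 = 0)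
    (hGmono : StrictMonoOn G (Set.Ici 0)) (hGconv : ConvexOn ℝ (Set.Ici 0) G)
    (hG0 : G 0 = 0) (hGnonneg : ∀ x ∈ Set.Ici (0 : ℝ), 0 ≤ G x)
    (hM : 2 ≤ Fintype.card M)
    (pMhat : M → M → ℝ) (hp : ∀ m, IsPMF (pMhat m)) :
    let N : ℝ := Fintype.card M
    let pM : M → ℝ := fun _ => 1 / N
    let ε : ℝ := ∑ m, pM m * ∑ m' ∈ Finset.univ.filter (fun m' => m' ≠ m), pMhat m m'
    Igf G f pM pMhat ≥
      G ((1 / N) * f (N * (1 - ε)) + ((N - 1) / N) * f (N * ε / (N - 1))) := by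
  intro N pM ε
  have hN : (2 : ℝ) ≤ N := by
    simp only [N]; exact_mod_cast hM
  have hN0 : (0 : ℝ) < N := by linarith
  have hN1 : (0 : ℝ) < N - 1 := by linarith
  have hsplit : ∀ (g : M → ℝ) (m : M),
      ∑ m', g m' = g m + ∑ m' ∈ Finset.univ.filter (fun m' => m' ≠ m), g m' := by
    intro g m
    rw [Finset.filter_ne', Finset.add_sum_erase _ _ (Finset.mem_univ m)]
  have hcard : ∑ _m : M, (1 : ℝ) = N := by simp [N]
  have hεo : ∑ m, ∑ m' ∈ Finset.univ.filter (fun m' => m' ≠ m), pMhat m m' = N * ε := by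
    simp only [ε, pM]
    rw [← Finset.mul_sum]
    field_simp
  have hεd : ∑ m, pMhat m m = N * (1 - ε) := by
    have : ∑ m, ∑ m', pMhat m m' = N := by
      rw [← hcard]; exact Finset.sum_congr rfl fun m _ => (hp m).2
    rw [Finset.sum_congr rfl fun m _ => hsplit (pMhat m) m, Finset.sum_add_distrib, hεo] at this
    linarith
  have hd0 : 0 ≤ N * (1 - ε) := by
    rw [← hεd]; exact Finset.sum_nonneg fun m _ => (hp m).1 m
  have ho0 : 0 ≤ N * ε / (N - 1) := by
    rw [← hεo]
    exact div_nonneg (Finset.sum_nonneg fun m _ => Finset.sum_nonneg fun m' _ => (hp m).1 m') hN1.le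
  have hR : 0 ≤ (1 / N) * f (N * (1 - ε)) + ((N - 1) / N) * f (N * ε / (N - 1)) := by
    have h := hf.2 (Set.mem_Ici.2 hd0) (Set.mem_Ici.2 ho0)
      (by positivity : 0 ≤ 1 / N) (by positivity : 0 ≤ (N - 1) / N) (by field_simp; ring)
    simp only [smul_eq_mul] at h
    have e : 1 / N * (N * (1 - ε)) + (N - 1) / N * (N * ε / (N - 1)) = 1 := by
      field_simp; ring
    rwa [e, hf1] at h
  have hpM : ∑ m, pM m = 1 := by
    simp only [pM]; rw [Finset.sum_const, nsmul_eq_mul]; simp only [Finset.card_univ]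
    exact mul_one_div_cancel hN0.ne'
  refine le_csInf ?_ ?_
  · exact ⟨_, pM, ⟨fun _ => by positivity, hpM⟩,
      fun x y h => absurd h (by simp only [pM]; positivity), rfl⟩
  rintro v ⟨q, hq, hac, rfl⟩
  have hD : ∀ m, 0 ≤ fDiv f (pMhat m) q := by
    intro m
    rw [fDiv_eq_aux _ _ _ hq.1]
    have h := jens_aux Finset.univ f hf q (pMhat m) (fun i _ => hq.1 i) (fun i _ => (hp m).1 i)
      (fun i _ => hac m i) (by rw [hq.2]; norm_num)
    rw [hq.2, (hp m).2] at h
    simpa [hf1] using h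
  have hG := hGconv.map_sum_le (t := Finset.univ) (w := pM) (p := fun m => fDiv f (pMhat m) q)
    (fun _ _ => by positivity) hpM (fun m _ => hD m)
  simp only [smul_eq_mul] at hG
  refine le_trans ?_ hG
  suffices h : (1 / N) * f (N * (1 - ε)) + ((N - 1) / N) * f (N * ε / (N - 1)) ≤
      ∑ m, pM m * fDiv f (pMhat m) q from
    hGmono.monotoneOn hR (hR.trans h) h
  have h1 := jens_aux Finset.univ f hf q (fun m => pMhat m m) (fun i _ => hq.1 i)
      (fun i _ => (hp i).1 i) (fun i _ => hac i i) (by rw [hq.2]; norm_num)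
  rw [hq.2, hεd, div_one, one_mul] at h1
  have hwo : ∑ m, ∑ m' ∈ Finset.univ.filter (fun m' => m' ≠ m), q m' = N - 1 := by
    have : ∑ m : M, ∑ m', q m' = N := by rw [← hcard, hq.2]
    rw [Finset.sum_congr rfl fun m _ => hsplit q m, Finset.sum_add_distrib, hq.2] at this
    linarith
  have h2 := jens_aux (Finset.univ.sigma fun m : M => Finset.univ.filter (fun m' => m' ≠ m)) f hf
      (fun x => q x.2) (fun x => pMhat x.1 x.2) (fun i _ => hq.1 _)
      (fun i _ => (hp _).1 _) (fun i _ => hac _ _) (by rw [Finset.sum_sigma, hwo]; exact hN1)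
  simp only [Finset.sum_sigma] at h2
  rw [hwo, hεo] at h2
  have h3 : ∑ m, pM m * fDiv f (pMhat m) q = (1 / N) * (∑ m, q m * f (pMhat m m / q m) +
      ∑ m, ∑ m' ∈ Finset.univ.filter (fun m' => m' ≠ m), q m' * f (pMhat m m' / q m')) := by
    simp only [pM]
    rw [← Finset.mul_sum, ← Finset.sum_add_distrib]
    congr 1
    refine Finset.sum_congr rfl fun m _ => ?_
    rw [fDiv_eq_aux _ _ _ hq.1]
    exact hsplit _ m
  rw [h3]
  have h4 := mul_le_mul_of_nonneg_left (add_le_add h1 h2) (by positivity : 0 ≤ 1 / N)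
  refine le_trans (le_of_eq ?_) h4
  ring
end

section
/- Let (G,f) be an admissible pair. If (G,f) is divergence-subadditive, then (G,f) is information-subadditive: for all finite sets X, Y, Z, every pmf p_X on X, every channel p_{Y|X} from X to Y and every channel p_{Z|X} from X to Z (so that Y → X → Z forms a Markov chain), one has I_{G,f}(p_X, p_{YZ|X}) ≤ I_{G,f}(p_X, p_{Y|X}) + I_{G,f}(p_X, p_{Z|X}), where p_{YZ|X}(y,z|x) = p_{Y|X}(y|x) p_{Z|X}(z|x). -/
open scoped BigOperators

/-- `D_m(f) = f 0 + lim_{t→∞} f t / t`, as an extended real.  For a convex `f`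
with `f 1 = 0` the limit equals the supremum of the slopes `f t / (t-1)` over `t > 1`. -/
noncomputable def Dm (f : ℝ → ℝ) : EReal :=
  (f 0 : EReal) + ⨆ t : {t : ℝ // 1 < t}, ((f t.1 / (t.1 - 1) : ℝ) : EReal)

/-- An admissible pair `(G, f)`: `f` is convex on `[0,∞)` with `f 1 = 0`, and
`G : [0, D_m(f)) → [0,∞)` is non-decreasing with `G 0 = 0`. -/
def Admissible (G f : ℝ → ℝ) : Prop :=
  ConvexOn ℝ (Set.Ici 0) f ∧ f 1 = 0 ∧ G 0 = 0 ∧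
    (∀ a b : ℝ, 0 ≤ a → a ≤ b → (b : EReal) < Dm f → G a ≤ G b) ∧
    (∀ a : ℝ, 0 ≤ a → (a : EReal) < Dm f → 0 ≤ G a)

/-- `(G,f)` is divergence-subadditive: for all finite alphabets and pmfs
`q_Y ≪ r_Y`, `q_Z ≪ r_Z`, one has
`G(D_f(q_Y⊗q_Z‖r_Y⊗r_Z)) ≤ G(D_f(q_Y‖r_Y)) + G(D_f(q_Z‖r_Z))`. -/
def DivSubadditive (G f : ℝ → ℝ) : Prop :=
  ∀ (Y Z : Type) [Fintype Y] [Fintype Z] (qY rY : Y → ℝ) (qZ rZ : Z → ℝ),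
    IsPMF qY → IsPMF rY → IsPMF qZ → IsPMF rZ →
    AbsCont qY rY → AbsCont qZ rZ →
    G (fDiv f (fun p : Y × Z => qY p.1 * qZ p.2) (fun p : Y × Z => rY p.1 * rZ p.2)) ≤
      G (fDiv f qY rY) + G (fDiv f qZ rZ)

/-- `(G,f)` is information-subadditive: for every pmf `p_X` and channels
`p_{Y|X}`, `p_{Z|X}` (so that `Y → X → Z` is a Markov chain),
`I_{G,f}(X;YZ) ≤ I_{G,f}(X;Y) + I_{G,f}(X;Z)`. -/
def InfoSubadditive (G f : ℝ → ℝ) : Prop :=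
  ∀ (X Y Z : Type) [Fintype X] [Fintype Y] [Fintype Z]
    (pX : X → ℝ) (W : X → Y → ℝ) (V : X → Z → ℝ),
    IsPMF pX → (∀ x, IsPMF (W x)) → (∀ x, IsPMF (V x)) →
    Igf G f pX (fun x (p : Y × Z) => W x p.1 * V x p.2) ≤
      Igf G f pX W + Igf G f pX V

theorem fDiv_eq_sum {X : Type*} [Fintype X] (f : ℝ → ℝ) (p q : X → ℝ) (hq : IsPMF q) :
    fDiv f p q = ∑ x, q x * f (p x / q x) := by
  unfold fDiv
  refine Finset.sum_congr rfl fun x _ => ?_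
  split_ifs with hx
  · rfl
  · have : q x = 0 := le_antisymm (not_lt.mp hx) (hq.1 x)
    simp [this]

theorem sum_ratio {X : Type*} [Fintype X] (p q : X → ℝ) (hp : IsPMF p)
    (hpq : AbsCont p q) : ∑ x, q x * (p x / q x) = 1 := by
  rw [← hp.2]
  refine Finset.sum_congr rfl fun x _ => ?_
  by_cases hx : q x = 0
  · simp [hx, hpq x hx]
  · field_simp

theorem fDiv_nonneg_aux {X : Type*} [Fintype X] (f : ℝ → ℝ) (hf : ConvexOn ℝ (Set.Ici 0) f)
    (h1 : f 1 = 0) (p q : X → ℝ) (hp : IsPMF p) (hq : IsPMF q) (hpq : AbsCont p q) :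
    0 ≤ fDiv f p q := by
  rw [fDiv_eq_sum f p q hq]
  have := hf.map_sum_le (t := Finset.univ) (w := q) (p := fun x => p x / q x)
    (fun x _ => hq.1 x) hq.2 (fun x _ => div_nonneg (hp.1 x) (hq.1 x))
  simp only [smul_eq_mul] at this
  rw [sum_ratio p q hp hpq, h1] at this
  exact this

theorem fDiv_upper {X : Type*} [Fintype X] (f : ℝ → ℝ) (hf : ConvexOn ℝ (Set.Ici 0) f)
    (p q : X → ℝ) (hp : IsPMF p) (hq : IsPMF q) (hpq : AbsCont p q) :
    ∃ T : ℝ, 1 < T ∧ fDiv f p q ≤ (1 - 1 / T) * (f 0 + f T / (T - 1)) := by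
  have hr : ∀ x, 0 ≤ p x / q x := fun x => div_nonneg (hp.1 x) (hq.1 x)
  obtain ⟨T, hT⟩ : ∃ T : ℝ, T = (∑ x, p x / q x) + 2 := ⟨_, rfl⟩
  have hS : 0 ≤ ∑ x, p x / q x := Finset.sum_nonneg fun x _ => hr x
  have hT1 : 1 < T := by linarith
  have hT0 : 0 < T := by linarith
  refine ⟨T, hT1, ?_⟩
  have hle : ∀ x, p x / q x ≤ T := fun x => by
    have := Finset.single_le_sum (f := fun x => p x / q x) (fun x _ => hr x) (Finset.mem_univ x)
    linarith
  have key : ∀ x, q x * f (p x / q x) ≤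
      q x * f 0 + (q x * (p x / q x)) * ((f T - f 0) / T) := fun x => by
    have hc := hf.2 (Set.mem_Ici.2 (le_refl (0 : ℝ))) (Set.mem_Ici.2 hT0.le)
      (show 0 ≤ 1 - (p x / q x) / T by rw [sub_nonneg, div_le_one hT0]; exact hle x) (show 0 ≤ (p x / q x) / T from div_nonneg (hr x) hT0.le) (by ring)
    simp only [smul_eq_mul, mul_zero, zero_add] at hc
    rw [div_mul_cancel₀ _ hT0.ne'] at hc
    have := mul_le_mul_of_nonneg_left hc (hq.1 x)
    refine this.trans (le_of_eq ?_)
    ring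
  rw [fDiv_eq_sum f p q hq]
  refine (Finset.sum_le_sum fun x _ => key x).trans (le_of_eq ?_)
  rw [Finset.sum_add_distrib, ← Finset.sum_mul, ← Finset.sum_mul, hq.2, sum_ratio p q hp hpq]
  have : T - 1 ≠ 0 := by linarith
  field_simp
  ring

theorem G_nonneg_aux {X : Type*} [Fintype X] (G f : ℝ → ℝ) (hGf : Admissible G f)
    (p q : X → ℝ) (hp : IsPMF p) (hq : IsPMF q) (hpq : AbsCont p q) :
    0 ≤ G (fDiv f p q) := by
  obtain ⟨hf, h1, hG0, -, hG⟩ := hGf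
  have h0 := fDiv_nonneg_aux f hf h1 p q hp hq hpq
  rcases h0.eq_or_lt with h | hpos
  · rw [← h, hG0]
  refine hG _ h0 ?_
  obtain ⟨T, hT, hle⟩ := fDiv_upper f hf p q hp hq hpq
  have hT0 : 0 < 1 / T := by positivity
  have hT1 : 1 / T < 1 := by rw [div_lt_one (by linarith)]; exact hT
  have hd : 0 < f 0 + f T / (T - 1) := by
    by_contra hcon
    nlinarith
  have hlt : fDiv f p q < f 0 + f T / (T - 1) := by nlinarith
  refine (EReal.coe_lt_coe_iff.2 hlt).trans_le ?_
  rw [EReal.coe_add]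
  unfold Dm
  gcongr
  exact le_iSup (fun t : {t : ℝ // 1 < t} => ((f t.1 / (t.1 - 1) : ℝ) : EReal)) ⟨T, hT⟩

theorem Igf_set_nonempty {X Y : Type*} [Fintype X] [Fintype Y]
    (G f : ℝ → ℝ) (pX : X → ℝ) (W : X → Y → ℝ) (hX : IsPMF pX) (hW : ∀ x, IsPMF (W x)) :
    {v : ℝ | ∃ qY : Y → ℝ, IsPMF qY ∧ (∀ x, AbsCont (W x) qY) ∧
      v = ∑ x, pX x * G (fDiv f (W x) qY)}.Nonempty := by
  have hXn : Nonempty X := by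
    by_contra hc
    rw [not_nonempty_iff] at hc
    simpa using hX.2
  obtain ⟨x0⟩ := hXn
  have hYn : Nonempty Y := by
    by_contra hc
    rw [not_nonempty_iff] at hc
    simpa using (hW x0).2
  have hcard : (Fintype.card Y : ℝ) ≠ 0 := by
    exact_mod_cast Fintype.card_ne_zero
  refine ⟨_, fun _ => (Fintype.card Y : ℝ)⁻¹, ⟨fun _ => by positivity, ?_⟩, ?_, rfl⟩
  · simp [hcard]
  · intro x y hy
    exact absurd hy (inv_ne_zero hcard)

theorem isPMF_prod {Y Z : Type*} [Fintype Y] [Fintype Z] (a : Y → ℝ) (b : Z → ℝ)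
    (ha : IsPMF a) (hb : IsPMF b) : IsPMF (fun p : Y × Z => a p.1 * b p.2) := by
  refine ⟨fun p => mul_nonneg (ha.1 _) (hb.1 _), ?_⟩
  rw [Fintype.sum_prod_type]
  simp only [← Finset.mul_sum, hb.2, mul_one, ha.2]

/-- For an admissible pair, divergence-subadditivity implies information-subadditivity. -/
theorem divSubadditive_implies_infoSubadditive (G f : ℝ → ℝ)
    (hGf : Admissible G f) (h : DivSubadditive G f) :
    InfoSubadditive G f := by
  intro X Y Z _ _ _ pX W V hX hW hV
  have key : ∀ a ∈ {v : ℝ | ∃ qY : Y → ℝ, IsPMF qY ∧ (∀ x, AbsCont (W x) qY) ∧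
      v = ∑ x, pX x * G (fDiv f (W x) qY)},
      ∀ b ∈ {v : ℝ | ∃ qY : Z → ℝ, IsPMF qY ∧ (∀ x, AbsCont (V x) qY) ∧
      v = ∑ x, pX x * G (fDiv f (V x) qY)},
      Igf G f pX (fun x (p : Y × Z) => W x p.1 * V x p.2) ≤ a + b := by
    rintro a ⟨qY, hqY, haY, rfl⟩ b ⟨qZ, hqZ, haZ, rfl⟩
    have hbdd : BddBelow {v : ℝ | ∃ q : Y × Z → ℝ, IsPMF q ∧
        (∀ x, AbsCont (fun p : Y × Z => W x p.1 * V x p.2) q) ∧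
        v = ∑ x, pX x * G (fDiv f (fun p : Y × Z => W x p.1 * V x p.2) q)} := by
      refine ⟨0, ?_⟩
      rintro v ⟨q, hq, ha, rfl⟩
      exact Finset.sum_nonneg fun x _ => mul_nonneg (hX.1 x)
        (G_nonneg_aux G f hGf _ _ (isPMF_prod _ _ (hW x) (hV x)) hq (ha x))
    refine (csInf_le hbdd ⟨fun p => qY p.1 * qZ p.2, isPMF_prod _ _ hqY hqZ, ?_, rfl⟩).trans ?_
    · intro x p hp
      rcases mul_eq_zero.1 hp with h0 | h0
      · simp [haY x _ h0]
      · simp [haZ x _ h0]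
    · rw [← Finset.sum_add_distrib]
      refine Finset.sum_le_sum fun x _ => ?_
      rw [← mul_add]
      exact mul_le_mul_of_nonneg_left
        (h Y Z (W x) qY (V x) qZ (hW x) hqY (hV x) hqZ (haY x) (haZ x)) (hX.1 x)
  rw [← sub_le_iff_le_add]
  refine le_csInf (Igf_set_nonempty G f pX W hX hW) fun a ha => ?_
  rw [sub_le_comm]
  refine le_csInf (Igf_set_nonempty G f pX V hX hV) fun b hb => ?_
  linarith [key a ha b hb]
end

section
/- Let f : [0,∞) → ℝ be a four times continuously differentiable convex function with f(1) = 1, and suppose g(x) = x²·f''(x) belongs to 𝒯⁺, i.e. g is nonnegative and x²·g''(x) − g(α)·g(x/α) ≤ 0 for all x ≥ 0 and α > 0. Then for all finite sets 𝒴, 𝒵 and all pmfs q_Y ≪ r_Y on 𝒴 and q_Z ≪ r_Z on 𝒵, Σ_f(q_Y⊗q_Z ‖ r_Y⊗r_Z) ≤ Σ_f(q_Y‖r_Y) · Σ_f(q_Z‖r_Z), where Σ_f(p‖q) = ∑_{x : q(x)>0} q(x) f(p(x)/q(x)). -/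
open scoped BigOperators

theorem aux_scale {h h' : ℝ → ℝ}
    (hh : ∀ x ∈ Set.Ici (0 : ℝ), HasDerivWithinAt h (h' x) (Set.Ici 0) x)
    {c : ℝ} (hc : 0 ≤ c) {y : ℝ} (hy : y ∈ Set.Ici (0 : ℝ)) :
    HasDerivWithinAt (fun y => h (c * y)) (h' (c * y) * c) (Set.Ici 0) y := by
  have h1 : HasDerivWithinAt (fun y : ℝ => c * y) c (Set.Ici 0) y := by
    simpa using (hasDerivWithinAt_id y (Set.Ici (0 : ℝ))).const_mul c
  have hm : Set.MapsTo (fun y : ℝ => c * y) (Set.Ici 0) (Set.Ici 0) :=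
    fun z hz => mul_nonneg hc hz
  exact HasDerivWithinAt.comp y (hh (c * y) (hm hy)) h1 hm

theorem aux_concave {F F' F'' : ℝ → ℝ}
    (h1 : ∀ x ∈ Set.Ici (0 : ℝ), HasDerivWithinAt F (F' x) (Set.Ici 0) x)
    (h2 : ∀ x ∈ Set.Ici (0 : ℝ), HasDerivWithinAt F' (F'' x) (Set.Ici 0) x)
    (h3 : ∀ x : ℝ, 0 < x → F'' x ≤ 0) : ConcaveOn ℝ (Set.Ici 0) F := by
  apply concaveOn_of_hasDerivWithinAt2_nonpos (convex_Ici 0) (f' := F') (f'' := F'')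
  · exact fun x hx => (h1 x hx).continuousWithinAt
  · intro x hx
    exact (h1 x (interior_subset hx)).mono interior_subset
  · intro x hx
    exact (h2 x (interior_subset hx)).mono interior_subset
  · intro x hx
    rw [interior_Ici] at hx
    exact h3 x hx

theorem aux_jensen {X : Type*} [Fintype X] {F : ℝ → ℝ} (hF : ConcaveOn ℝ (Set.Ici 0) F)
    {q r : X → ℝ} (hq : IsPMF q) (hr : IsPMF r) (hqr : AbsCont q r) :
    ∑ x, r x * F (q x / r x) ≤ F 1 := by
  have h := hF.le_map_sum (t := Finset.univ) (w := r) (p := fun x => q x / r x)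
    (fun x _ => hr.1 x) hr.2 (fun x _ => div_nonneg (hq.1 x) (hr.1 x))
  have e : ∑ x, r x • (q x / r x) = 1 := by
    rw [← hq.2]
    refine Finset.sum_congr rfl fun x _ => ?_
    rcases eq_or_ne (r x) 0 with h0 | h0
    · simp [h0, hqr x h0]
    · simp only [smul_eq_mul]; field_simp
  rw [e] at h
  simpa using h

theorem aux_fDiv {X : Type*} [Fintype X] (f : ℝ → ℝ) (p : X → ℝ) {r : X → ℝ}
    (hr : ∀ x, 0 ≤ r x) : fDiv f p r = ∑ x, r x * f (p x / r x) := by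
  refine Finset.sum_congr rfl fun x _ => ?_
  split_ifs with h
  · rfl
  · have : r x = 0 := le_antisymm (not_lt.1 h) (hr x)
    simp [this]

/-- Theorem for `G(x) = log(1+x)`: if `f` is four times continuously differentiable
and convex on `[0,∞)` with `f 1 = 1`, and `g x = x² f''(x)` belongs to `𝒯⁺`
(i.e. `g ≥ 0` and `x² g''(x) − g(α) g(x/α) ≤ 0` for all `x ≥ 0`, `α > 0`), then
`Σ_f` is submultiplicative over products:
`Σ_f(q_Y⊗q_Z‖r_Y⊗r_Z) ≤ Σ_f(q_Y‖r_Y) · Σ_f(q_Z‖r_Z)`. -/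
theorem fDiv_submultiplicative_of_Tplus
    (f f' f'' f3 f4 g g' g'' : ℝ → ℝ)
    (hf' : ∀ x ∈ Set.Ici (0 : ℝ), HasDerivWithinAt f (f' x) (Set.Ici 0) x)
    (hf'' : ∀ x ∈ Set.Ici (0 : ℝ), HasDerivWithinAt f' (f'' x) (Set.Ici 0) x)
    (hf3 : ∀ x ∈ Set.Ici (0 : ℝ), HasDerivWithinAt f'' (f3 x) (Set.Ici 0) x)
    (hf4 : ∀ x ∈ Set.Ici (0 : ℝ), HasDerivWithinAt f3 (f4 x) (Set.Ici 0) x)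
    (hf4cont : ContinuousOn f4 (Set.Ici 0))
    (hconv : ConvexOn ℝ (Set.Ici 0) f) (hf1 : f 1 = 1)
    (hg : ∀ x : ℝ, g x = x ^ 2 * f'' x)
    (hg' : ∀ x ∈ Set.Ici (0 : ℝ), HasDerivWithinAt g (g' x) (Set.Ici 0) x)
    (hg'' : ∀ x ∈ Set.Ici (0 : ℝ), HasDerivWithinAt g' (g'' x) (Set.Ici 0) x)
    (hg_nonneg : ∀ x ∈ Set.Ici (0 : ℝ), 0 ≤ g x)
    (hTplus : ∀ x ∈ Set.Ici (0 : ℝ), ∀ α : ℝ, 0 < α →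
      x ^ 2 * g'' x - g α * g (x / α) ≤ 0) :
    ∀ (Y Z : Type) [Fintype Y] [Fintype Z] (qY rY : Y → ℝ) (qZ rZ : Z → ℝ),
      IsPMF qY → IsPMF rY → IsPMF qZ → IsPMF rZ → AbsCont qY rY → AbsCont qZ rZ →
      fDiv f (fun p : Y × Z => qY p.1 * qZ p.2) (fun p : Y × Z => rY p.1 * rZ p.2) ≤
        fDiv f qY rY * fDiv f qZ rZ := by
  intro Y Z _ _ qY rY qZ rZ hqY hrY hqZ hrZ haY haZ
  set C := fDiv f qZ rZ with hC
  have hC' : C = ∑ z, rZ z * f (qZ z / rZ z) := aux_fDiv f qZ hrZ.1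
  have hx : ∀ z, 0 ≤ qZ z / rZ z := fun z => div_nonneg (hqZ.1 z) (hrZ.1 z)
  -- inner concavity
  have inner : ∀ y : ℝ, 0 < y →
      ∑ z, rZ z * (f'' (qZ z / rZ z * y) * (qZ z / rZ z) * (qZ z / rZ z)) - C * f'' y ≤ 0 := by
    intro y hy
    have hc : ConcaveOn ℝ (Set.Ici 0) (fun x => g (y * x) / y ^ 2 - f x * f'' y) := by
      apply aux_concave
        (F' := fun x => (g' (y * x) * y) / y ^ 2 - f' x * f'' y)
        (F'' := fun x => (g'' (y * x) * y * y) / y ^ 2 - f'' x * f'' y)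
      · intro x hx
        exact ((aux_scale hg' hy.le hx).div_const _).sub ((hf' x hx).mul_const _)
      · intro x hx
        exact (((aux_scale hg'' hy.le hx).mul_const y).div_const _).sub ((hf'' x hx).mul_const _)
      · intro x hx
        have h := hTplus (y * x) (mul_nonneg hy.le hx.le) y hy
        have e : y * x / y = x := by field_simp
        rw [e, hg y, hg x] at h
        have e2 : g'' (y * x) * y * y / y ^ 2 = g'' (y * x) := by field_simp
        simp only [e2]
        have h4 : (y * x) ^ 2 * (g'' (y * x) - f'' x * f'' y) ≤ 0 := by linarith
        have h5 : 0 < (y * x) ^ 2 := by positivity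
        by_contra hcon
        push Not at hcon
        nlinarith [mul_pos h5 hcon]
    have h := aux_jensen hc hqZ hrZ haZ
    have e1 : g (y * 1) / y ^ 2 - f 1 * f'' y = 0 := by
      rw [hf1, hg]; field_simp; simp
    rw [e1] at h
    refine le_trans (le_of_eq ?_) h
    rw [hC', Finset.sum_mul, ← Finset.sum_sub_distrib]
    refine Finset.sum_congr rfl fun z _ => ?_
    rw [hg, mul_comm y]
    generalize qZ z / rZ z = t
    field_simp
  have hc : ConcaveOn ℝ (Set.Ici 0)
      (fun y => ∑ z, rZ z * f (qZ z / rZ z * y) - C * f y) := by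
    apply aux_concave
      (F' := fun y => ∑ z, rZ z * (f' (qZ z / rZ z * y) * (qZ z / rZ z)) - C * f' y)
      (F'' := fun y => ∑ z, rZ z * (f'' (qZ z / rZ z * y) * (qZ z / rZ z) * (qZ z / rZ z))
        - C * f'' y)
    · intro y hy
      exact (HasDerivWithinAt.fun_sum fun z _ => (aux_scale hf' (hx z) hy).const_mul _).sub
        ((hf' y hy).const_mul _)
    · intro y hy
      exact (HasDerivWithinAt.fun_sum fun z _ =>
        ((aux_scale hf'' (hx z) hy).mul_const _).const_mul _).sub ((hf'' y hy).const_mul _)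
    · exact inner
  have h := aux_jensen hc hqY hrY haY
  simp only [mul_one, ← hC', hf1, sub_self] at h
  rw [aux_fDiv (X := Y × Z) f _ (fun p => mul_nonneg (hrY.1 p.1) (hrZ.1 p.2)), aux_fDiv f qY hrY.1,
    Fintype.sum_prod_type, Finset.sum_mul, ← sub_nonpos, ← Finset.sum_sub_distrib]
  refine le_trans (le_of_eq ?_) h
  refine Finset.sum_congr rfl fun y _ => ?_
  rw [mul_sub, Finset.mul_sum]
  congr 1
  · refine Finset.sum_congr rfl fun z _ => ?_
    simp only
    rw [mul_comm (qZ z / rZ z), div_mul_div_comm, mul_assoc]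
  · ring
end

section
/- Let (G,f) be an admissible pair that is divergence-subadditive. Let p, q be pmfs on a finite set 𝒳 with p ≪ q, let n ≥ 1, and let p_{U|Xⁿ} be a randomized binary test, i.e. for each xⁿ ∈ 𝒳ⁿ a pmf p_{U|Xⁿ}(·|xⁿ) on {0,1}. Define α = ∑_{xⁿ} (∏_{i=1}^n p(x_i)) · p_{U|Xⁿ}(1|xⁿ) and β = ∑_{xⁿ} (∏_{i=1}^n q(x_i)) · p_{U|Xⁿ}(1|xⁿ), and assume 0 < β < 1. Then 𝒟_{G,f}(Bern(α)‖Bern(β)) ≤ n · 𝒟_{G,f}(p‖q), where Bern(α) denotes the pmf on {0,1} assigning probability α to 1. -/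
open scoped BigOperators

lemma fDiv_eq' {X : Type*} [Fintype X] (f : ℝ → ℝ) {p q : X → ℝ} (hq : IsPMF q) :
    fDiv f p q = ∑ x, q x * f (p x / q x) := by
  unfold fDiv
  refine Finset.sum_congr rfl fun x _ => ?_
  split_ifs with h
  · rfl
  · have : q x = 0 := le_antisymm (not_lt.mp h) (hq.1 x)
    simp [this]

lemma mul_div_ac {X : Type*} {p q : X → ℝ} (hpq : AbsCont p q) (x : X) :
    q x * (p x / q x) = p x := by
  by_cases h : q x = 0
  · rw [h, hpq x h]; simp
  · field_simp

lemma jensen_aux {X : Type*} [Fintype X] {f : ℝ → ℝ} (hf : ConvexOn ℝ (Set.Ici 0) f)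
    {p q : X → ℝ} (hp : IsPMF p) (hq : IsPMF q) (hpq : AbsCont p q)
    (w : X → ℝ) (hw : ∀ x, 0 ≤ w x) (hQ : 0 < ∑ x, q x * w x) :
    (∑ x, q x * w x) * f ((∑ x, p x * w x) / (∑ x, q x * w x)) ≤
      ∑ x, w x * (q x * f (p x / q x)) := by
  set Q := ∑ x, q x * w x with hQd
  have h := hf.map_sum_le (t := Finset.univ) (w := fun x => q x * w x / Q)
    (p := fun x => p x / q x)
    (fun x _ => div_nonneg (mul_nonneg (hq.1 x) (hw x)) hQ.le)
    (by rw [← Finset.sum_div]; exact div_self hQ.ne')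
    (fun x _ => div_nonneg (hp.1 x) (hq.1 x))
  have e1 : ∑ x, (q x * w x / Q) • (p x / q x) = (∑ x, p x * w x) / Q := by
    rw [Finset.sum_div]
    refine Finset.sum_congr rfl fun x _ => ?_
    rw [smul_eq_mul, ← mul_div_ac hpq x]
    by_cases h : q x = 0
    · simp [h]
    · field_simp
  rw [e1] at h
  have h2 := mul_le_mul_of_nonneg_left h hQ.le
  refine h2.trans (le_of_eq ?_)
  rw [Finset.mul_sum]
  refine Finset.sum_congr rfl fun x _ => ?_
  rw [smul_eq_mul]
  field_simp

lemma fDiv_nonneg' {X : Type*} [Fintype X] {f : ℝ → ℝ} (hf : ConvexOn ℝ (Set.Ici 0) f)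
    (h1 : f 1 = 0) {p q : X → ℝ} (hp : IsPMF p) (hq : IsPMF q) (hpq : AbsCont p q) :
    0 ≤ fDiv f p q := by
  have h := jensen_aux hf hp hq hpq (fun _ => 1) (fun _ => zero_le_one) (by simp [hq.2])
  rw [fDiv_eq' f hq]
  simpa [hp.2, hq.2, h1] using h

lemma fDiv_lt_or {f : ℝ → ℝ} (hf : ConvexOn ℝ (Set.Ici 0) f) (h1 : f 1 = 0)
    {X : Type*} [Fintype X] {p q : X → ℝ} (hp : IsPMF p) (hq : IsPMF q) (hpq : AbsCont p q) :
    ((fDiv f p q : ℝ) : EReal) < Dm f ∨ fDiv f p q ≤ 0 := by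
  have hle : ∀ t : ℝ, 1 < t → ((f t / (t - 1) : ℝ) : EReal) ≤
      ⨆ t : {t : ℝ // 1 < t}, ((f t.1 / (t.1 - 1) : ℝ) : EReal) := fun t ht =>
    le_iSup (fun t : {t : ℝ // 1 < t} => ((f t.1 / (t.1 - 1) : ℝ) : EReal)) ⟨t, ht⟩
  unfold Dm
  generalize (⨆ t : {t : ℝ // 1 < t}, ((f t.1 / (t.1 - 1) : ℝ) : EReal)) = S at hle ⊢
  induction S using EReal.rec with
  | bot => exact absurd (le_bot_iff.mp (hle 2 (by norm_num))) (EReal.coe_ne_bot _)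
  | top => left; rw [EReal.coe_add_top]; exact EReal.coe_lt_top _
  | coe S =>
    have hS : ∀ t : ℝ, 1 < t → f t ≤ S * (t - 1) := fun t ht => by
      have := EReal.coe_le_coe_iff.mp (hle t ht)
      rwa [div_le_iff₀ (by linarith)] at this
    have hl : ∀ t : ℝ, 0 ≤ t → t ≤ 1 → f t ≤ (1 - t) * f 0 := fun t h0 h1' => by
      have := hf.2 (show (0:ℝ) ∈ Set.Ici 0 by simp) (show (1:ℝ) ∈ Set.Ici 0 by simp)
        (show (0:ℝ) ≤ 1 - t by linarith) h0 (by ring)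
      simpa [h1] using this
    have h0S : 0 ≤ f 0 + S := by
      have := hf.2 (show (0:ℝ) ∈ Set.Ici 0 by simp) (show (2:ℝ) ∈ Set.Ici 0 by simp)
        (show (0:ℝ) ≤ 1/2 by norm_num) (show (0:ℝ) ≤ 1/2 by norm_num) (by norm_num)
      have h2 := hS 2 (by norm_num)
      norm_num [h1] at this h2
      linarith
    rw [← EReal.coe_add, EReal.coe_lt_coe_iff, fDiv_eq' f hq]
    rcases h0S.eq_or_lt with h | h
    · right
      have : ∑ x, q x * f (p x / q x) ≤ ∑ x, (S * p x - S * q x) := by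
        refine Finset.sum_le_sum fun x _ => ?_
        have ht : f (p x / q x) ≤ S * (p x / q x - 1) := by
          rcases lt_or_ge 1 (p x / q x) with h' | h'
          · exact hS _ h'
          · have := hl _ (div_nonneg (hp.1 x) (hq.1 x)) h'
            have e : f 0 = - S := by linarith
            rw [e] at this; linarith
        have := mul_le_mul_of_nonneg_left ht (hq.1 x)
        have e := mul_div_ac hpq x
        calc _ ≤ _ := this
          _ = S * (q x * (p x / q x)) - S * q x := by ring
          _ = _ := by rw [e]
      rw [Finset.sum_sub_distrib, ← Finset.mul_sum, ← Finset.mul_sum, hp.2, hq.2] at this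
      linarith
    · left
      have hlt : ∀ t : ℝ, 0 < t → f t < f 0 + t * S := fun t ht => by
        rcases lt_or_ge 1 t with h' | h'
        · have := hS t h'; nlinarith
        · have := hl t ht.le h'; nlinarith
      have hterm : ∀ x, q x * (f 0 + (p x / q x) * S) = f 0 * q x + S * p x := fun x => by
        have e := mul_div_ac hpq x
        calc _ = f 0 * q x + S * (q x * (p x / q x)) := by ring
          _ = _ := by rw [e]
      have : ∑ x, q x * f (p x / q x) < ∑ x, (f 0 * q x + S * p x) := by
        apply Finset.sum_lt_sum
        · intro x _
          rw [← hterm]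
          refine mul_le_mul_of_nonneg_left ?_ (hq.1 x)
          rcases (div_nonneg (hp.1 x) (hq.1 x)).eq_or_lt with h' | h'
          · rw [← h']; simp
          · exact (hlt _ h').le
        · have : ∃ x, p x ≠ 0 := by
            by_contra hc
            push Not at hc
            have := hp.2
            simp [hc] at this
          obtain ⟨x, hx⟩ := this
          have hqx : q x ≠ 0 := fun h => hx (hpq x h)
          have hqx' := lt_of_le_of_ne (hq.1 x) hqx.symm
          have hpx' := lt_of_le_of_ne (hp.1 x) hx.symm
          refine ⟨x, Finset.mem_univ _, ?_⟩
          rw [← hterm]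
          exact mul_lt_mul_of_pos_left (hlt _ (div_pos hpx' hqx')) hqx'
      rw [Finset.sum_add_distrib, ← Finset.mul_sum, ← Finset.mul_sum, hp.2, hq.2] at this
      linarith

lemma fDiv_equiv {X Y : Type*} [Fintype X] [Fintype Y] (f : ℝ → ℝ) (e : X ≃ Y)
    (p q : Y → ℝ) : fDiv f (fun x => p (e x)) (fun x => q (e x)) = fDiv f p q := by
  unfold fDiv
  exact Equiv.sum_comp e (fun y => if 0 < q y then q y * f (p y / q y) else 0)

lemma isPMF_equiv {X Y : Type*} [Fintype X] [Fintype Y] (e : X ≃ Y)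
    {p : Y → ℝ} (hp : IsPMF p) : IsPMF (fun x => p (e x)) :=
  ⟨fun x => hp.1 _, by rw [Equiv.sum_comp e p]; exact hp.2⟩

lemma sub_univ {G f : ℝ → ℝ} (hsub : DivSubadditive G f) {Y Z : Type*} [Fintype Y] [Fintype Z]
    {qY rY : Y → ℝ} {qZ rZ : Z → ℝ} (h1 : IsPMF qY) (h2 : IsPMF rY) (h3 : IsPMF qZ)
    (h4 : IsPMF rZ) (h5 : AbsCont qY rY) (h6 : AbsCont qZ rZ) :
    G (fDiv f (fun p : Y × Z => qY p.1 * qZ p.2) (fun p : Y × Z => rY p.1 * rZ p.2)) ≤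
      G (fDiv f qY rY) + G (fDiv f qZ rZ) := by
  let eY := (Fintype.equivFin Y).symm
  let eZ := (Fintype.equivFin Z).symm
  have h := hsub _ _ _ _ _ _ (isPMF_equiv eY h1) (isPMF_equiv eY h2) (isPMF_equiv eZ h3)
    (isPMF_equiv eZ h4) (fun x => h5 (eY x)) (fun x => h6 (eZ x))
  rw [fDiv_equiv f eY, fDiv_equiv f eZ] at h
  have e := fDiv_equiv f (eY.prodCongr eZ) (fun p : Y × Z => qY p.1 * qZ p.2)
    (fun p : Y × Z => rY p.1 * rZ p.2)
  rw [← e]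
  exact h

lemma isPMF_pi {X : Type*} [Fintype X] {p : X → ℝ} (hp : IsPMF p) (n : ℕ) :
    IsPMF (fun x : Fin n → X => ∏ i, p (x i)) := by
  classical
  refine ⟨fun x => Finset.prod_nonneg fun i _ => hp.1 _, ?_⟩
  have := Finset.prod_univ_sum (fun _ : Fin n => (Finset.univ : Finset X)) (fun _ x => p x)
  simp only [hp.2, Finset.prod_const_one, Fintype.piFinset_univ] at this
  exact this.symm

lemma absCont_pi {X : Type*} {p q : X → ℝ} (hpq : AbsCont p q) (n : ℕ) :
    AbsCont (fun x : Fin n → X => ∏ i, p (x i)) (fun x : Fin n → X => ∏ i, q (x i)) := by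
  intro x hx
  obtain ⟨i, hi, h⟩ := Finset.prod_eq_zero_iff.mp hx
  exact Finset.prod_eq_zero hi (hpq _ h)

lemma tensor_bound {X : Type*} [Fintype X] {G f : ℝ → ℝ} (hG : G 0 = 0) (h1 : f 1 = 0)
    (hsub : DivSubadditive G f) {p q : X → ℝ} (hp : IsPMF p) (hq : IsPMF q)
    (hpq : AbsCont p q) (n : ℕ) :
    G (fDiv f (fun x : Fin n → X => ∏ i, p (x i)) (fun x : Fin n → X => ∏ i, q (x i))) ≤
      n * G (fDiv f p q) := by
  induction n with
  | zero => simp [fDiv, h1, hG]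
  | succ n ih =>
    have h := sub_univ hsub hp hq (isPMF_pi hp n) (isPMF_pi hq n) hpq (absCont_pi hpq n)
    have e := fDiv_equiv f (Fin.consEquiv (fun _ : Fin (n+1) => X))
      (fun x : Fin (n+1) → X => ∏ i, p (x i)) (fun x : Fin (n+1) → X => ∏ i, q (x i))
    simp only [Fin.prod_univ_succ, Fin.consEquiv, Equiv.coe_fn_mk, Fin.cons_zero,
      Fin.cons_succ] at e
    simp only [Fin.prod_univ_succ]
    rw [← e]
    push_cast
    linarith

/-- Binary hypothesis testing bound: for i.i.d. samples from `p` (resp. `q`) and a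
randomized binary test `p_{U|Xⁿ}` with acceptance probabilities `α`, `β`, one has
`𝒟_{G,f}(Bern α‖Bern β) ≤ n · 𝒟_{G,f}(p‖q)` whenever `(G,f)` is an admissible
divergence-subadditive pair. -/
theorem hypothesis_testing_bound
    {X : Type*} [Fintype X] (G f : ℝ → ℝ)
    (hGf : Admissible G f) (hsub : DivSubadditive G f)
    (p q : X → ℝ) (hp : IsPMF p) (hq : IsPMF q) (hpq : AbsCont p q)
    (n : ℕ) (hn : 1 ≤ n)
    (pU : (Fin n → X) → Bool → ℝ) (hU : ∀ xn, IsPMF (pU xn)) :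
    let α : ℝ := ∑ xn : Fin n → X, (∏ i, p (xn i)) * pU xn true
    let β : ℝ := ∑ xn : Fin n → X, (∏ i, q (xn i)) * pU xn true
    0 < β → β < 1 →
      G (fDiv f (fun b : Bool => if b then α else 1 - α)
                (fun b : Bool => if b then β else 1 - β)) ≤
        (n : ℝ) * G (fDiv f p q) := by
  intro α β hβ0 hβ1
  obtain ⟨hf, h1, hG, hmono, -⟩ := hGf
  refine le_trans ?_ (tensor_bound hG h1 hsub hp hq hpq n)
  have hP := isPMF_pi hp n
  have hQ := isPMF_pi hq n
  have hPQ := absCont_pi hpq n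
  have hsum : ∀ x, pU x true + pU x false = 1 := fun x => by
    have := (hU x).2
    rwa [Fintype.sum_bool] at this
  have comp : ∀ {r : X → ℝ}, IsPMF r →
      ∑ x : Fin n → X, (∏ i, r (x i)) * pU x false =
        1 - ∑ x : Fin n → X, (∏ i, r (x i)) * pU x true := fun {r} hr => by
    rw [eq_sub_iff_add_eq, ← Finset.sum_add_distrib, ← (isPMF_pi hr n).2]
    refine Finset.sum_congr rfl fun x _ => ?_
    rw [← mul_add, add_comm, hsum, mul_one]
  have hα0 : 0 ≤ α := Finset.sum_nonneg fun x _ => mul_nonneg (hP.1 x) ((hU x).1 _)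
  have hα1 : 0 ≤ 1 - α := by
    rw [← comp hp]
    exact Finset.sum_nonneg fun x _ => mul_nonneg (hP.1 x) ((hU x).1 _)
  have hBa : IsPMF (fun b : Bool => if b then α else 1 - α) :=
    ⟨fun b => by cases b <;> simp <;> linarith, by simp⟩
  have hBb : IsPMF (fun b : Bool => if b then β else 1 - β) :=
    ⟨fun b => by cases b <;> simp <;> linarith, by simp⟩
  have hBab : AbsCont (fun b : Bool => if b then α else 1 - α)
      (fun b : Bool => if b then β else 1 - β) := by
    intro b hb
    cases b <;> simp at hb <;> linarith
  have hnn := fDiv_nonneg' hf h1 hBa hBb hBab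
  have dpi : fDiv f (fun b : Bool => if b then α else 1 - α)
      (fun b : Bool => if b then β else 1 - β) ≤
      fDiv f (fun x : Fin n → X => ∏ i, p (x i)) (fun x : Fin n → X => ∏ i, q (x i)) := by
    have j1 := jensen_aux hf hP hQ hPQ (fun x => pU x true) (fun x => (hU x).1 _) hβ0
    have j2 := jensen_aux hf hP hQ hPQ (fun x => pU x false) (fun x => (hU x).1 _)
      (by rw [comp hq]; exact sub_pos.mpr hβ1)
    rw [comp hp, comp hq] at j2
    have j3 := add_le_add j1 j2
    rw [← Finset.sum_add_distrib] at j3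
    simp only [← add_mul, hsum, one_mul] at j3
    rw [fDiv_eq' f hBb, fDiv_eq' f hQ, Fintype.sum_bool]
    exact j3
  rcases fDiv_lt_or hf h1 hP hQ hPQ with h | h
  · exact hmono _ _ hnn dpi h
  · rw [le_antisymm (dpi.trans h) hnn, le_antisymm h (hnn.trans dpi)]
end
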